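/- Let f: ℝⁿ → ℝ be L-smooth, bounded below by f*, and suppose a direct-search method with polling sets of cosine measure at least τ > 0, directions of unit norm, forcing function ρ(α) = c·α², and stepsize updates α_{k+1} = γ·α_k (success) or α_{k+1} = θ·α_k (failure), 0 < θ < 1 ≤ γ, is run from x_0. Then for any ε > 0, the first index k at which ‖∇f(x_k)‖ ≤ ε occurs after at most O(τ⁻²ε⁻²) iterations, where the constant depends only on L, c, θ, γ, α_0, and f(x_0) - f*. -/

import Mathlib

local notation "⟪" x ", " y "⟫" => @inner ℝ _ _ x y

theorem ds_descent {E : Type*} [NormedAddCommGroup E] [InnerProductSpace ℝ E] [CompleteSpace E]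
    (f : E → ℝ) (g : E → E) (L : ℝ) (hg : ∀ y, HasGradientAt f (g y) y)
    (hLip : ∀ y z, ‖g y - g z‖ ≤ L * ‖y - z‖) (x v : E) :
    f (x + v) ≤ f x + ⟪g x, v⟫ + L / 2 * ‖v‖ ^ 2 := by
  have hd : ∀ t : ℝ, HasDerivAt
      (fun t : ℝ => f (x + t • v) - t * ⟪g x, v⟫ - L / 2 * ‖v‖ ^ 2 * t ^ 2)
      (⟪g (x + t • v), v⟫ - ⟪g x, v⟫ - L * ‖v‖ ^ 2 * t) t := by
    intro t
    have h1 : HasDerivAt (fun t : ℝ => x + t • v) v t := by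
      simpa using ((hasDerivAt_id t).smul_const v).const_add x
    have h2 := (hg (x + t • v)).hasFDerivAt.comp_hasDerivAt t h1
    have h3 : HasDerivAt (fun t : ℝ => f (x + t • v)) ⟪g (x + t • v), v⟫ t := by
      rw [InnerProductSpace.toDual_apply_apply] at h2
      exact h2
    have h4 : HasDerivAt (fun t : ℝ => t * ⟪g x, v⟫) ⟪g x, v⟫ t := by
      simpa using (hasDerivAt_id t).mul_const ⟪g x, v⟫
    have h5 := (hasDerivAt_pow 2 t).const_mul (L / 2 * ‖v‖ ^ 2)
    refine ((h3.sub h4).sub h5).congr_deriv ?_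
    norm_num
    ring
  have hanti : AntitoneOn
      (fun t : ℝ => f (x + t • v) - t * ⟪g x, v⟫ - L / 2 * ‖v‖ ^ 2 * t ^ 2) (Set.Icc 0 1) := by
    apply antitoneOn_of_deriv_nonpos (convex_Icc 0 1)
    · exact fun t _ => (hd t).continuousAt.continuousWithinAt
    · exact fun t _ => (hd t).differentiableAt.differentiableWithinAt
    · intro t ht
      rw [interior_Icc] at ht
      rw [(hd t).deriv, ← inner_sub_left]
      have h1 := real_inner_le_norm (g (x + t • v) - g x) v
      have h2 := hLip (x + t • v) x
      rw [add_sub_cancel_left, norm_smul, Real.norm_of_nonneg ht.1.le] at h2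
      have h3 := mul_le_mul_of_nonneg_right h2 (norm_nonneg v)
      nlinarith
  have := hanti (Set.left_mem_Icc.2 zero_le_one) (Set.right_mem_Icc.2 zero_le_one) zero_le_one
  simp at this
  linarith

theorem ds_grad_bound {E : Type*} [NormedAddCommGroup E] [InnerProductSpace ℝ E] [CompleteSpace E]
    (f : E → ℝ) (g : E → E) (L : ℝ) (hL : 0 ≤ L) (hg : ∀ y, HasGradientAt f (g y) y)
    (hLip : ∀ y z, ‖g y - g z‖ ≤ L * ‖y - z‖) (fstar Δ : ℝ) (hf : ∀ y, fstar ≤ f y)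
    (x : E) (hx : f x - fstar ≤ Δ) : ‖g x‖ ^ 2 ≤ 2 * L * Δ := by
  have key : ∀ s : ℝ, s * ‖g x‖ ^ 2 - L / 2 * s ^ 2 * ‖g x‖ ^ 2 ≤ Δ := by
    intro s
    have h := ds_descent f g L hg hLip x ((-s) • g x)
    rw [inner_smul_right, real_inner_self_eq_norm_sq, norm_smul, mul_pow, Real.norm_eq_abs,
      sq_abs] at h
    have := hf (x + (-s) • g x)
    nlinarith
  rcases hL.eq_or_lt with h0 | h0
  · subst h0
    by_contra hcon
    have hG : 0 < ‖g x‖ ^ 2 := by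
      have : g x ≠ 0 := by simpa using hcon
      positivity
    have := key ((Δ + 1) / ‖g x‖ ^ 2)
    rw [div_mul_cancel₀ _ hG.ne'] at this
    simp at this
    linarith
  · have := key (1 / L)
    have e : 1 / L * ‖g x‖ ^ 2 - L / 2 * (1 / L) ^ 2 * ‖g x‖ ^ 2 = ‖g x‖ ^ 2 / (2 * L) := by
      field_simp
      ring
    rw [e, div_le_iff₀ (by positivity)] at this
    linarith

set_option maxHeartbeats 1000000 in
/-- worst-case complexity of direct search with sufficient decrease
`ρ(α) = c α²`, unit-norm poll directions with cosine measure at least `τ`, and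
stepsize updates `γ α_k` / `θ α_k`. There is a constant `C` depending only on
`L, c, θ, γ, α₀` and `Δ ≥ f(x₀) - f*` such that an iterate with `‖∇f(x_k)‖ ≤ ε`
is reached within `C τ⁻² ε⁻²` iterations. -/
theorem stmt12 (L c θ γ α0 Δ : ℝ) (hL : 0 ≤ L) (hc : 0 < c)
    (hθ0 : 0 < θ) (hθ1 : θ < 1) (hγ : 1 ≤ γ) (hα0 : 0 < α0) (hΔ : 0 ≤ Δ) :
    ∃ C : ℝ, 0 < C ∧
      ∀ (n : ℕ) (f : EuclideanSpace ℝ (Fin n) → ℝ)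
        (g : EuclideanSpace ℝ (Fin n) → EuclideanSpace ℝ (Fin n))
        (fstar : ℝ) (x : ℕ → EuclideanSpace ℝ (Fin n)) (αs : ℕ → ℝ)
        (D : ℕ → Finset (EuclideanSpace ℝ (Fin n))) (τ ε : ℝ),
        (∀ y, HasGradientAt f (g y) y) →
        (∀ y z, ‖g y - g z‖ ≤ L * ‖y - z‖) →
        (∀ y, fstar ≤ f y) → (f (x 0) - fstar ≤ Δ) →
        0 < τ → 0 < ε →
        (∀ k, ∀ d ∈ D k, ‖d‖ = 1) →
        (∀ k, ∀ v : EuclideanSpace ℝ (Fin n), v ≠ 0 → ∃ d ∈ D k, τ * ‖v‖ ≤ ⟪d, v⟫) →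
        αs 0 = α0 →
        (∀ k, ((∃ d ∈ D k, x (k + 1) = x k + αs k • d ∧
                  f (x (k + 1)) < f (x k) - c * (αs k) ^ 2) ∧ αs (k + 1) = γ * αs k) ∨
              ((∀ d ∈ D k, f (x k) - c * (αs k) ^ 2 ≤ f (x k + αs k • d)) ∧
                x (k + 1) = x k ∧ αs (k + 1) = θ * αs k)) →
        ∃ k : ℕ, ‖g (x k)‖ ≤ ε ∧ (k : ℝ) ≤ C * τ⁻¹ ^ 2 * ε⁻¹ ^ 2 := by
  have hlθ : 0 < -Real.log θ := by linarith [Real.log_neg hθ0 hθ1]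
  have hlγ : 0 ≤ Real.log γ := Real.log_nonneg hγ
  set q : ℝ := -Real.log θ with hq
  set R : ℝ := 1 + Real.log γ / q with hR
  have hRpos : 0 < R := by positivity
  set A : ℝ := Δ / c * R + α0 ^ 2 / q with hA
  have hApos : 0 < A := by positivity
  set B : ℝ := 2 * L * Δ / α0 ^ 2 + (L / 2 + c) ^ 2 / θ ^ 2 with hB
  have hBpos : 0 < B := by positivity
  refine ⟨A * B, by positivity, ?_⟩
  intro n f g fstar x αs D τ ε hg hLip hf hΔ' hτ hε hD hcos h0 hstep
  by_contra hcon
  push Not at hcon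
  have hbd0 : (0 : ℝ) ≤ A * B * τ⁻¹ ^ 2 * ε⁻¹ ^ 2 := by positivity
  have hlarge : ∀ k : ℕ, (k : ℝ) ≤ A * B * τ⁻¹ ^ 2 * ε⁻¹ ^ 2 → ε < ‖g (x k)‖ := by
    intro k hk
    by_contra h
    exact absurd (hcon k (not_lt.1 h)) (not_lt.2 hk)
  have hg0 : ε < ‖g (x 0)‖ := hlarge 0 (by simpa using hbd0)
  have hGb := ds_grad_bound f g L hL hg hLip fstar Δ hf (x 0) hΔ'
  have hε2 : ε ^ 2 ≤ 2 * L * Δ := le_trans (by gcongr) hGb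
  have hτ1 : τ ≤ 1 := by
    have hne : g (x 0) ≠ 0 := norm_pos_iff.1 (hε.trans hg0)
    obtain ⟨d, hd, h⟩ := hcos 0 _ hne
    have h2 := real_inner_le_norm d (g (x 0))
    rw [hD 0 d hd] at h2
    exact le_of_mul_le_mul_right (h.trans h2) (hε.trans hg0)
  set a : ℝ := τ * ε / (L / 2 + c) with ha
  have hLc : 0 < L / 2 + c := by positivity
  have hapos : 0 < a := by positivity
  set m : ℝ := min α0 (θ * a) with hm
  have hmpos : 0 < m := lt_min hα0 (by positivity)
  have hm2 : (1 : ℝ) / m ^ 2 ≤ B * τ⁻¹ ^ 2 * ε⁻¹ ^ 2 := by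
    have e : B * τ⁻¹ ^ 2 * ε⁻¹ ^ 2
        = 2 * L * Δ / (α0 ^ 2 * τ ^ 2 * ε ^ 2) + 1 / (θ * a) ^ 2 := by
      rw [hB, ha]
      field_simp
    have h1 : 1 / α0 ^ 2 ≤ 2 * L * Δ / (α0 ^ 2 * τ ^ 2 * ε ^ 2) := by
      rw [div_le_div_iff₀ (by positivity) (by positivity)]
      have : τ ^ 2 * ε ^ 2 ≤ 2 * L * Δ := by
        have : τ ^ 2 ≤ 1 := pow_le_one₀ hτ.le hτ1
        nlinarith [sq_nonneg ε]
      nlinarith [sq_nonneg α0]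
    have p1 : 0 ≤ 1 / α0 ^ 2 := by positivity
    have p2 : 0 ≤ 1 / (θ * a) ^ 2 := by positivity
    rw [e]
    rcases min_choice α0 (θ * a) with h | h
    · rw [hm, h]; linarith
    · rw [hm, h]; linarith
  have hfail : ∀ k, ε < ‖g (x k)‖ → 0 < αs k →
      (∀ d ∈ D k, f (x k) - c * (αs k) ^ 2 ≤ f (x k + αs k • d)) → a ≤ αs k := by
    intro k hk hα h
    have hne : -g (x k) ≠ 0 := neg_ne_zero.2 (norm_pos_iff.1 (hε.trans hk))
    obtain ⟨d, hd, h1⟩ := hcos k _ hne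
    have h2 := h d hd
    have h3 := ds_descent f g L hg hLip (x k) (αs k • d)
    rw [inner_smul_right, norm_smul, hD k d hd, Real.norm_of_nonneg hα.le, mul_one,
      real_inner_comm] at h3
    rw [norm_neg, inner_neg_right] at h1
    have h4 : αs k * (τ * ε) ≤ αs k * (αs k * (L / 2 + c)) := by
      have : τ * ε ≤ τ * ‖g (x k)‖ := by gcongr
      have h5 := mul_le_mul_of_nonneg_left (this.trans h1) hα.le
      linarith only [h5, h2, h3]
    rw [ha, div_le_iff₀ hLc]
    exact le_of_mul_le_mul_left h4 hα
  have main : ∀ k : ℕ, (∀ j < k, ε < ‖g (x j)‖) → m ≤ αs k ∧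
      (k : ℝ) ≤ (f (x 0) - f (x k)) / (c * m ^ 2) * R + (Real.log α0 - Real.log (αs k)) / q := by
    intro k
    induction k with
    | zero => intro _; simp [h0, hm]
    | succ k ih =>
      intro hk
      obtain ⟨i1, i2⟩ := ih (fun j hj => hk j (by omega))
      have hα : 0 < αs k := hmpos.trans_le i1
      rcases hstep k with ⟨⟨d, hd, hx, hdec⟩, hs⟩ | ⟨hno, hx, hs⟩
      · refine ⟨by rw [hs]; nlinarith, ?_⟩
        rw [hs, Real.log_mul (by positivity) hα.ne']
        have h1 : (f (x 0) - f (x k)) / (c * m ^ 2) + 1 ≤ (f (x 0) - f (x (k+1))) / (c * m ^ 2) := by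
          rw [div_add_one (by positivity)]
          gcongr
          have : c * m ^ 2 ≤ c * (αs k) ^ 2 := by gcongr
          linarith
        have h2 := mul_le_mul_of_nonneg_right h1 hRpos.le
        have h3 : (Real.log α0 - (Real.log γ + Real.log (αs k))) / q
            = (Real.log α0 - Real.log (αs k)) / q - Real.log γ / q := by ring
        rw [h3]
        push_cast
        linarith
      · have hak := hfail k (hk k (by omega)) hα hno
        refine ⟨(min_le_right _ _).trans (by rw [hs]; gcongr), ?_⟩
        rw [hs, hx, Real.log_mul hθ0.ne' hα.ne']
        have h3 : (Real.log α0 - (Real.log θ + Real.log (αs k))) / q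
            = (Real.log α0 - Real.log (αs k)) / q + 1 := by
          rw [div_add_one hlθ.ne', hq]; congr 1; ring
        rw [h3]
        push_cast
        linarith
  set N := ⌊A * B * τ⁻¹ ^ 2 * ε⁻¹ ^ 2⌋₊ + 1 with hN
  obtain ⟨m1, m2⟩ := main N (fun j hj => hlarge j ((Nat.le_floor_iff hbd0).1 (by omega)))
  have hNgt : A * B * τ⁻¹ ^ 2 * ε⁻¹ ^ 2 < N := by
    rw [hN]; push_cast; exact Nat.lt_floor_add_one _
  have b1 : (f (x 0) - f (x N)) / (c * m ^ 2) * R ≤ Δ / (c * m ^ 2) * R := by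
    gcongr
    linarith [hf (x N)]
  have b2 : (Real.log α0 - Real.log (αs N)) / q ≤ (α0 ^ 2 / m ^ 2) / q := by
    gcongr
    have l1 : Real.log m ≤ Real.log (αs N) := Real.log_le_log hmpos m1
    have l2 : Real.log α0 - Real.log m = Real.log (α0 / m) :=
      (Real.log_div hα0.ne' hmpos.ne').symm
    have l3 := Real.log_le_sub_one_of_pos (div_pos hα0 hmpos)
    rw [← div_pow]
    nlinarith [sq_nonneg (α0 / m - 1)]
  have b3 : Δ / (c * m ^ 2) * R + (α0 ^ 2 / m ^ 2) / q = A * (1 / m ^ 2) := by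
    rw [hA]
    field_simp
  have b4 := mul_le_mul_of_nonneg_left hm2 hApos.le
  have b5 : A * (B * τ⁻¹ ^ 2 * ε⁻¹ ^ 2) = A * B * τ⁻¹ ^ 2 * ε⁻¹ ^ 2 := by ring
  linarith
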